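/- Under the 2-group SBM with observation errors, suppose q ∈ (0,1) and β ∈ (0,1). Write β_{11} = β − γ_1/√n, β_{22} = β − γ_2/√n, q* = (1 − β)q, and p*_g = (1 − β + γ_g/√n)(q + μ_g/√n) for g = 1,2. Then the vector n·(û_{1,1} − p*_1, û_{2,1} − β_{11}p*_1, û_{1,2} − p*_2, û_{2,2} − β_{22}p*_2, û_{1,b} − q*, û_{2,b} − βq*) converges in distribution to a centered 6-dimensional Gaussian with block-diagonal covariance diag(a_κ^{−1}Σ_u, b_κ^{−1}Σ_u, c_κ^{−1}Σ_u), where a_κ = κ²/2, b_κ = (1−κ)²/2, c_κ = κ(1−κ), and Σ_u is the 2×2 matrix with entries Σ_u[1,1] = q*(1−q*), Σ_u[1,2] = Σ_u[2,1] = (1/2 − q*)βq*, Σ_u[2,2] = (1/2 − βq*)βq*. Moreover, Σ_u is strictly positive definite, and consequently (û_{1,1}, û_{2,1}, û_{1,2}, û_{2,2}, û_{1,b}, û_{2,b}) converges in probability to (q*, βq*, q*, βq*, q*, βq*). -/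

import Mathlib

/-!
STATEMENT 11: Joint asymptotic normality of the localized empirical moments
under the 2-group SBM with observation errors.  Convergence in distribution to
the centered 6-dimensional Gaussian with block-diagonal covariance
diag(a_κ⁻¹Σ_u, b_κ⁻¹Σ_u, c_κ⁻¹Σ_u) is expressed by the Cramér–Wold device:
every nonzero linear combination converges in distribution (pointwise in the
CDF) to the corresponding one-dimensional centred Gaussian.  The statement
also asserts that Σ_u is strictly positive definite, and the consistency of
the six empirical moments.  The model hypothesis holds for all large n (so
that all the n-dependent parameters are genuine probabilities).
-/

open MeasureTheory ProbabilityTheory Filter Finset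

noncomputable section

/-- Mass of a label configuration: i.i.d. labels, `true` (minority) w.p. κ. -/
def labelMass (κ : ℝ) {n : ℕ} (l : Fin n → Bool) : ℝ :=
  ∏ i, (if l i then κ else 1 - κ)

/-- Conditional mass of an adjacency configuration given labels:
independent Bernoulli edges with success probability `B (l i) (l j)`, i < j. -/
def edgeMass {n : ℕ} (B : Bool → Bool → ℝ) (l : Fin n → Bool)
    (a : Fin n → Fin n → Bool) : ℝ :=
  ∏ p ∈ Finset.univ.filter (fun p : Fin n × Fin n => p.1 < p.2),
    (if a p.1 p.2 then B (l p.1) (l p.2) else 1 - B (l p.1) (l p.2))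

/-- Conditional mass of an observed network `y` given the construct network
`a` and the labels: each present edge of `a` is kept independently with
probability `1 − βm (l i) (l j)` (type II error rate `βm`), and no edges are
added. -/
def obsMass {n : ℕ} (βm : Bool → Bool → ℝ) (l : Fin n → Bool)
    (a y : Fin n → Fin n → Bool) : ℝ :=
  ∏ p ∈ Finset.univ.filter (fun p : Fin n × Fin n => p.1 < p.2),
    (if a p.1 p.2 then
      (if y p.1 p.2 then 1 - βm (l p.1) (l p.2) else βm (l p.1) (l p.2))
     else (if y p.1 p.2 then 0 else 1))

/-- The symmetric 2×2 matrix with within-group values `x₁` (group 1 = `true`),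
`x₂` (group 2 = `false`) and between-group value `xb`. -/
def sbmB (x₁ x₂ xb : ℝ) : Bool → Bool → ℝ :=
  fun x y => if x then (if y then x₁ else xb) else (if y then xb else x₂)

/-- `(P, c, A, Y, Y')` is a 2-group SBM with connectivity matrix `B` and two
conditionally independent noisy replicates `Y`, `Y'` with group-dependent
type II error rates `βm`.  The joint law is specified by its probability
mass function. -/
structure IsObsSBM {Ω : Type*} [MeasurableSpace Ω] (P : Measure Ω) (n : ℕ)
    (B βm : Bool → Bool → ℝ) (κ : ℝ)
    (c : Ω → Fin n → Bool) (A Y Y' : Ω → Fin n → Fin n → Bool) : Prop where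
  isProb : IsProbabilityMeasure P
  symmA : ∀ ω i j, A ω i j = A ω j i
  looplessA : ∀ ω i, A ω i i = false
  symmY : ∀ ω i j, Y ω i j = Y ω j i
  looplessY : ∀ ω i, Y ω i i = false
  symmY' : ∀ ω i j, Y' ω i j = Y' ω j i
  looplessY' : ∀ ω i, Y' ω i i = false
  law : ∀ (l : Fin n → Bool) (a y y' : Fin n → Fin n → Bool),
    (∀ i j, a i j = a j i) → (∀ i, a i i = false) →
    (∀ i j, y i j = y j i) → (∀ i, y i i = false) →
    (∀ i j, y' i j = y' j i) → (∀ i, y' i i = false) →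
    P {ω | c ω = l ∧ A ω = a ∧ Y ω = y ∧ Y' ω = y'}
      = ENNReal.ofReal (labelMass κ l * edgeMass B l a *
          obsMass βm l a y * obsMass βm l a y')

/-- Number of unordered pairs `i < j` selected by `sel`. -/
def pairCard {n : ℕ} (sel : Fin n → Fin n → Bool) : ℝ :=
  ((Finset.univ.filter
      (fun p : Fin n × Fin n => p.1 < p.2 ∧ sel p.1 p.2 = true)).card : ℝ)

/-- Pairs within group 1. -/
def within1 {n : ℕ} (c : Fin n → Bool) : Fin n → Fin n → Bool :=
  fun i j => c i && c j

/-- Pairs within group 2. -/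
def within2 {n : ℕ} (c : Fin n → Bool) : Fin n → Fin n → Bool :=
  fun i j => !(c i) && !(c j)

/-- Between-group pairs. -/
def between {n : ℕ} (c : Fin n → Bool) : Fin n → Fin n → Bool :=
  fun i j => c i != c j

/-- `û₁`: observed edge density over the pairs selected by `cls`. -/
def u1hat {n : ℕ} (cls y : Fin n → Fin n → Bool) : ℝ :=
  pairCard (fun i j => cls i j && y i j) / pairCard cls

/-- `û₂`: half the disagreement rate of the two replicates over the pairs
selected by `cls`. -/
def u2hat {n : ℕ} (cls y y' : Fin n → Fin n → Bool) : ℝ :=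
  pairCard (fun i j => cls i j && (y i j != y' i j)) / (2 * pairCard cls)

/-- Estimator of the type II error rate over the pairs selected by `cls`. -/
def betaHat {n : ℕ} (cls y y' : Fin n → Fin n → Bool) : ℝ :=
  u2hat cls y y' / u1hat cls y

/-- `γ̂₁ = √n (β̂_b − β̂₁)`. -/
def gammaHat1 {n : ℕ} (c : Fin n → Bool) (y y' : Fin n → Fin n → Bool) : ℝ :=
  Real.sqrt n * (betaHat (between c) y y' - betaHat (within1 c) y y')

/-- `γ̂₂ = √n (β̂_b − β̂₂)`. -/
def gammaHat2 {n : ℕ} (c : Fin n → Bool) (y y' : Fin n → Fin n → Bool) : ℝ :=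
  Real.sqrt n * (betaHat (between c) y y' - betaHat (within2 c) y y')

/-- `μ̂₁ = √n (û₁,₁/(1−β̂₁) − û₁,b/(1−β̂_b))`. -/
def muHat1 {n : ℕ} (c : Fin n → Bool) (y y' : Fin n → Fin n → Bool) : ℝ :=
  Real.sqrt n * (u1hat (within1 c) y / (1 - betaHat (within1 c) y y')
    - u1hat (between c) y / (1 - betaHat (between c) y y'))

/-- `μ̂₂ = √n (û₁,₂/(1−β̂₂) − û₁,b/(1−β̂_b))`. -/
def muHat2 {n : ℕ} (c : Fin n → Bool) (y y' : Fin n → Fin n → Bool) : ℝ :=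
  Real.sqrt n * (u1hat (within2 c) y / (1 - betaHat (within2 c) y y')
    - u1hat (between c) y / (1 - betaHat (between c) y y'))

/-- The centered vector of the six localized empirical moments, scaled by n. -/
def obsVec {n : ℕ} (q β μ₁ μ₂ γ₁ γ₂ : ℝ) (c : Fin n → Bool)
    (y y' : Fin n → Fin n → Bool) : Fin 6 → ℝ :=
  ![ (n : ℝ) * (u1hat (within1 c) y
        - (1 - β + γ₁ / Real.sqrt n) * (q + μ₁ / Real.sqrt n)),
     (n : ℝ) * (u2hat (within1 c) y y'
        - (β - γ₁ / Real.sqrt n) *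
          ((1 - β + γ₁ / Real.sqrt n) * (q + μ₁ / Real.sqrt n))),
     (n : ℝ) * (u1hat (within2 c) y
        - (1 - β + γ₂ / Real.sqrt n) * (q + μ₂ / Real.sqrt n)),
     (n : ℝ) * (u2hat (within2 c) y y'
        - (β - γ₂ / Real.sqrt n) *
          ((1 - β + γ₂ / Real.sqrt n) * (q + μ₂ / Real.sqrt n))),
     (n : ℝ) * (u1hat (between c) y - (1 - β) * q),
     (n : ℝ) * (u2hat (between c) y y' - β * ((1 - β) * q)) ]

/-- The 2×2 matrix Σ_u (with `qs = q* = (1−β)q`). -/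
def SigmaU (qs β : ℝ) : Matrix (Fin 2) (Fin 2) ℝ :=
  !![qs * (1 - qs),            (1 / 2 - qs) * β * qs;
     (1 / 2 - qs) * β * qs,    (1 / 2 - β * qs) * β * qs]

/-- Entries of Σ_u indexed by `ℕ` (for assembling the 6×6 covariance). -/
def SigmaUfun (qs β : ℝ) : ℕ → ℕ → ℝ := fun i j =>
  if i = 0 then (if j = 0 then qs * (1 - qs) else (1 / 2 - qs) * β * qs)
  else (if j = 0 then (1 / 2 - qs) * β * qs else (1 / 2 - β * qs) * β * qs)

/-- Block scaling constants a_κ = κ²/2, b_κ = (1−κ)²/2, c_κ = κ(1−κ). -/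
def blockScale (κ : ℝ) : ℕ → ℝ := fun b =>
  if b = 0 then κ ^ 2 / 2 else if b = 1 then (1 - κ) ^ 2 / 2 else κ * (1 - κ)

/-- The block-diagonal 6×6 covariance diag(a_κ⁻¹Σ_u, b_κ⁻¹Σ_u, c_κ⁻¹Σ_u). -/
def Sigma6 (κ qs β : ℝ) : Fin 6 → Fin 6 → ℝ := fun k k' =>
  if (k : ℕ) / 2 = (k' : ℕ) / 2 then
    (blockScale κ ((k : ℕ) / 2))⁻¹ * SigmaUfun qs β ((k : ℕ) % 2) ((k' : ℕ) % 2)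
  else 0

/-- Quadratic form of a 6×6 matrix. -/
def quadForm6 (M : Fin 6 → Fin 6 → ℝ) (t : Fin 6 → ℝ) : ℝ :=
  ∑ k, ∑ k', t k * M k k' * t k'

section Helpers

open Topology Complex in
lemma pow_tendsto_exp_gen {ι : Type*} {l : Filter ι} {φ : ι → ℂ} {N : ι → ℕ} {z : ℂ}
    (hN : Tendsto N l atTop)
    (h : Tendsto (fun i => (N i : ℂ) * (φ i - 1)) l (𝓝 z)) :
    Tendsto (fun i => φ i ^ N i) l (𝓝 (Complex.exp z)) := by
  have hNr : Tendsto (fun i => ((N i : ℂ))⁻¹) l (𝓝 0) := by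
    have h1 : Tendsto (fun n : ℕ => ((n : ℂ))⁻¹) atTop (𝓝 0) :=
      tendsto_inv_atTop_nhds_zero_nat (𝕜 := ℂ)
    exact h1.comp hN
  have hpos : ∀ᶠ i in l, N i ≠ 0 := by
    filter_upwards [hN.eventually_ge_atTop 1] with i hi
    omega
  have hg : Tendsto (fun i => φ i - 1) l (𝓝 0) := by
    have := hNr.mul h
    rw [zero_mul] at this
    refine this.congr' ?_
    filter_upwards [hpos] with i hi
    have : (N i : ℂ) ≠ 0 := by exact_mod_cast hi
    field_simp
  have hsmall : ∀ᶠ i in l, ‖φ i - 1‖ < 1 / 2 := by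
    have := hg.norm
    rw [norm_zero] at this
    exact this.eventually_lt_const (by norm_num)
  have hlog : Tendsto (fun i => (N i : ℂ) * Complex.log (1 + (φ i - 1))) l (𝓝 z) := by
    have hd : Tendsto (fun i => (N i : ℂ) * (Complex.log (1 + (φ i - 1)) - (φ i - 1))) l (𝓝 0) := by
      have hb : Tendsto (fun i => ‖(N i : ℂ) * (φ i - 1)‖ * ‖φ i - 1‖) l (𝓝 0) := by
        have := h.norm.mul hg.norm
        simpa using this
      refine squeeze_zero_norm' ?_ hb
      filter_upwards [hsmall] with i hi
      have h1 := Complex.norm_log_one_add_sub_self_le (z := φ i - 1) (by linarith)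
      rw [norm_mul, norm_mul, mul_assoc]
      gcongr
      refine h1.trans ?_
      have h2 : (1 - ‖φ i - 1‖)⁻¹ ≤ 2 := by
        rw [inv_le_comm₀ (by linarith) (by norm_num)]
        linarith
      have h3 := norm_nonneg (φ i - 1)
      nlinarith [mul_le_mul_of_nonneg_left h2 (sq_nonneg ‖φ i - 1‖)]
    have := hd.add h
    rw [zero_add] at this
    refine this.congr fun i => by ring
  have := (Complex.continuous_exp.tendsto z).comp hlog
  refine this.congr' ?_
  filter_upwards [hsmall] with i hi
  simp only [Function.comp]
  rw [Complex.exp_nat_mul, Complex.exp_log]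
  · ring
  · intro h0
    have : φ i - 1 = -1 := by linear_combination h0
    rw [this] at hi
    norm_num at hi

/-- Joint weight of the latent and observed values on one pair. -/
def wgt (B b : ℝ) (x : Bool × Bool × Bool) : ℝ :=
  (if x.1 then B else 1 - B) *
  (if x.1 then (if x.2.1 then 1 - b else b) else (if x.2.1 then 0 else 1)) *
  (if x.1 then (if x.2.2 then 1 - b else b) else (if x.2.2 then 0 else 1))

/-- Centered linear statistic on one pair. -/
def dst (B b τ₁ τ₂ : ℝ) (x : Bool × Bool × Bool) : ℝ :=
  τ₁ * ((if x.2.1 then 1 else 0) - (1 - b) * B) +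
  τ₂ * ((if x.2.1 != x.2.2 then 1 else 0) / 2 - b * ((1 - b) * B))

/-- Quadratic form of Σ_u. -/
def quadU (B b τ₁ τ₂ : ℝ) : ℝ :=
  τ₁ ^ 2 * (((1 - b) * B) * (1 - (1 - b) * B)) +
  2 * τ₁ * τ₂ * ((1 / 2 - (1 - b) * B) * b * ((1 - b) * B)) +
  τ₂ ^ 2 * ((1 / 2 - b * ((1 - b) * B)) * b * ((1 - b) * B))

lemma wgt_sum (B b : ℝ) : ∑ x, wgt B b x = 1 := by
  simp [wgt, Fintype.sum_prod_type]; ring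

lemma wgt_mean (B b τ₁ τ₂ : ℝ) : ∑ x, wgt B b x * dst B b τ₁ τ₂ x = 0 := by
  simp [wgt, dst, Fintype.sum_prod_type]; ring

lemma wgt_var (B b τ₁ τ₂ : ℝ) :
    ∑ x, wgt B b x * dst B b τ₁ τ₂ x ^ 2 = quadU B b τ₁ τ₂ := by
  simp [wgt, dst, quadU, Fintype.sum_prod_type]; ring

lemma wgt_nonneg {B b : ℝ} (hB : B ∈ Set.Icc (0:ℝ) 1) (hb : b ∈ Set.Icc (0:ℝ) 1) (x) :
    0 ≤ wgt B b x := by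
  obtain ⟨h1, h2⟩ := hB
  obtain ⟨h3, h4⟩ := hb
  unfold wgt
  refine mul_nonneg (mul_nonneg ?_ ?_) ?_ <;> split_ifs <;> linarith

/-- One-pair characteristic function. -/
def phi (B b τ₁ τ₂ θ : ℝ) : ℂ :=
  ∑ x, (wgt B b x : ℂ) * Complex.exp ((θ * dst B b τ₁ τ₂ x : ℝ) * Complex.I)

open Topology in
lemma tendsto_comp_two {ι : Type*} {l : Filter ι} {f : ℝ → ℝ → ℝ} {B b : ι → ℝ} {q β : ℝ}
    (hc : Continuous (fun p : ℝ × ℝ => f p.1 p.2))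
    (hB : Tendsto B l (𝓝 q)) (hb : Tendsto b l (𝓝 β)) :
    Tendsto (fun i => f (B i) (b i)) l (𝓝 (f q β)) :=
  Tendsto.comp (hc.tendsto (q, β)) (hB.prodMk_nhds hb)

open Topology in
lemma phi_tendsto {ι : Type*} {l : Filter ι} {B b θ : ι → ℝ} {N : ι → ℕ} {q β r : ℝ}
    (τ₁ τ₂ : ℝ)
    (hB : Tendsto B l (𝓝 q)) (hb : Tendsto b l (𝓝 β)) (hθ : Tendsto θ l (𝓝 0))
    (hN : Tendsto N l atTop)
    (hNθ : Tendsto (fun i => (N i : ℝ) * θ i ^ 2) l (𝓝 r)) :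
    Tendsto (fun i => phi (B i) (b i) τ₁ τ₂ (θ i) ^ N i) l
      (𝓝 (Complex.exp ((-(r * quadU q β τ₁ τ₂) / 2 : ℝ)))) := by
  apply pow_tendsto_exp_gen hN
  have hw : ∀ x, Tendsto (fun i => wgt (B i) (b i) x) l (𝓝 (wgt q β x)) := by
    intro x
    have hc : Continuous (fun p : ℝ × ℝ => wgt p.1 p.2 x) := by
      simp only [wgt]
      refine (Continuous.mul (Continuous.mul ?_ ?_) ?_) <;> split_ifs <;> fun_prop
    exact tendsto_comp_two (f := fun u v => wgt u v x) hc hB hb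
  have hd : ∀ x, Tendsto (fun i => dst (B i) (b i) τ₁ τ₂ x) l (𝓝 (dst q β τ₁ τ₂ x)) := by
    intro x
    have hc : Continuous (fun p : ℝ × ℝ => dst p.1 p.2 τ₁ τ₂ x) := by
      simp only [dst]
      fun_prop
    exact tendsto_comp_two (f := fun u v => dst u v τ₁ τ₂ x) hc hB hb
  have hv : Tendsto (fun i => quadU (B i) (b i) τ₁ τ₂) l (𝓝 (quadU q β τ₁ τ₂)) := by
    have hc : Continuous (fun p : ℝ × ℝ => quadU p.1 p.2 τ₁ τ₂) := by
      unfold quadU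
      fun_prop
    exact tendsto_comp_two (f := fun u v => quadU u v τ₁ τ₂) hc hB hb
  -- remainder
  let R : ι → Bool × Bool × Bool → ℂ := fun i x =>
    Complex.exp ((θ i * dst (B i) (b i) τ₁ τ₂ x : ℝ) * Complex.I) -
      ∑ m ∈ Finset.range 3, ((θ i * dst (B i) (b i) τ₁ τ₂ x : ℝ) * Complex.I) ^ m / m.factorial
  have hR : ∀ x, Tendsto (fun i => (N i : ℂ) * R i x) l (𝓝 0) := by
    intro x
    have hθd : Tendsto (fun i => θ i * dst (B i) (b i) τ₁ τ₂ x) l (𝓝 0) := by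
      simpa using hθ.mul (hd x)
    have hb : Tendsto (fun i => ((N i : ℝ) * θ i ^ 2) * (|θ i| * |dst (B i) (b i) τ₁ τ₂ x| ^ 3 *
        Real.exp |θ i * dst (B i) (b i) τ₁ τ₂ x|)) l (𝓝 0) := by
      have h1 := hNθ.mul ((hθ.abs.mul ((hd x).abs.pow 3)).mul
        ((Real.continuous_exp.tendsto _).comp hθd.abs))
      simpa using h1
    refine squeeze_zero_norm (fun i => ?_) hb
    have h1 := Complex.norm_exp_sub_sum_le_norm_mul_exp
      ((θ i * dst (B i) (b i) τ₁ τ₂ x : ℝ) * Complex.I) 3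
    have h2 : ‖((θ i * dst (B i) (b i) τ₁ τ₂ x : ℝ) : ℂ) * Complex.I‖
        = |θ i * dst (B i) (b i) τ₁ τ₂ x| := by
      rw [norm_mul, Complex.norm_I, mul_one, Complex.norm_real, Real.norm_eq_abs]
    rw [h2] at h1
    rw [norm_mul, Complex.norm_natCast]
    calc (N i : ℝ) * ‖R i x‖ ≤ (N i : ℝ) * (|θ i * dst (B i) (b i) τ₁ τ₂ x| ^ 3 *
          Real.exp |θ i * dst (B i) (b i) τ₁ τ₂ x|) := by gcongr
      _ = _ := by
        rw [abs_mul, ← sq_abs (θ i)]; ring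
  have hkey : ∀ i, (N i : ℂ) * (phi (B i) (b i) τ₁ τ₂ (θ i) - 1) =
      ∑ x, (wgt (B i) (b i) x : ℂ) * ((N i : ℂ) * R i x) +
        ((-(((N i : ℝ) * θ i ^ 2) * quadU (B i) (b i) τ₁ τ₂) / 2 : ℝ) : ℂ) := by
    intro i
    have e0 : (∑ x, (wgt (B i) (b i) x : ℂ)) = 1 := by exact_mod_cast wgt_sum (B i) (b i)
    have e1 : (∑ x, (wgt (B i) (b i) x : ℂ) * (dst (B i) (b i) τ₁ τ₂ x : ℂ)) = 0 := by
      exact_mod_cast wgt_mean (B i) (b i) τ₁ τ₂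
    have e2 : (∑ x, (wgt (B i) (b i) x : ℂ) * (dst (B i) (b i) τ₁ τ₂ x : ℂ) ^ 2) =
        (quadU (B i) (b i) τ₁ τ₂ : ℂ) := by
      exact_mod_cast wgt_var (B i) (b i) τ₁ τ₂
    have e3 : ∑ x, (wgt (B i) (b i) x : ℂ) * ((N i : ℂ) * R i x) =
        (N i : ℂ) * phi (B i) (b i) τ₁ τ₂ (θ i) - (N i : ℂ) * (∑ x, (wgt (B i) (b i) x : ℂ))
        - (N i : ℂ) * θ i * Complex.I *
            (∑ x, (wgt (B i) (b i) x : ℂ) * (dst (B i) (b i) τ₁ τ₂ x : ℂ))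
        + (N i : ℂ) * θ i ^ 2 / 2 *
            (∑ x, (wgt (B i) (b i) x : ℂ) * (dst (B i) (b i) τ₁ τ₂ x : ℂ) ^ 2) := by
      simp only [phi, Finset.mul_sum, ← Finset.sum_sub_distrib, ← Finset.sum_add_distrib, R]
      refine Finset.sum_congr rfl fun x _ => ?_
      simp only [Finset.sum_range_succ, Finset.sum_range_zero, Nat.factorial]
      push_cast
      ring_nf
      rw [Complex.I_sq]
      ring
    rw [e3, e0, e1, e2]
    push_cast
    ring
  simp_rw [hkey]
  have h1 : Tendsto (fun i => ∑ x, (wgt (B i) (b i) x : ℂ) * ((N i : ℂ) * R i x)) l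
      (𝓝 (∑ x, (wgt q β x : ℂ) * 0)) := by
    refine tendsto_finsetSum _ fun x _ => Tendsto.mul ?_ (hR x)
    exact (hw x).ofReal
  have h2 := ((hNθ.mul hv).neg.div_const 2).ofReal
  have h3 := h1.add h2
  simpa using h3

/-- Size of group 1. -/
def nOne {n : ℕ} (l : Fin n → Bool) : ℝ := ∑ i, (if l i then (1:ℝ) else 0)

lemma sum_bool_succ {M : Type*} [AddCommMonoid M] {n : ℕ} (f : (Fin (n + 1) → Bool) → M) :
    ∑ l, f l = ∑ l : Fin n → Bool, (f (Fin.cons true l) + f (Fin.cons false l)) := by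
  rw [← (Fin.consEquiv (fun _ : Fin (n + 1) => Bool)).sum_comp, Fintype.sum_prod_type]
  simp [Fin.consEquiv, Finset.sum_add_distrib]

lemma labelMass_cons (κ : ℝ) {n : ℕ} (x : Bool) (l : Fin n → Bool) :
    labelMass κ (Fin.cons x l : Fin (n + 1) → Bool) = (if x then κ else 1 - κ) * labelMass κ l := by
  simp [labelMass, Fin.prod_univ_succ]

lemma nOne_cons {n : ℕ} (x : Bool) (l : Fin n → Bool) :
    nOne (Fin.cons x l : Fin (n + 1) → Bool) = (if x then 1 else 0) + nOne l := by
  simp only [nOne, Fin.sum_univ_succ, Fin.cons_zero, Fin.cons_succ]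

lemma labelMass_sum (κ : ℝ) (n : ℕ) : ∑ l : Fin n → Bool, labelMass κ l = 1 := by
  induction n with
  | zero => simp [labelMass]
  | succ n ih =>
    rw [sum_bool_succ]
    simp only [labelMass_cons]
    refine Eq.trans (Finset.sum_congr rfl fun l _ => ?_) ih
    simp only [if_true, Bool.false_eq_true, if_false]
    ring

lemma labelMass_mean (κ : ℝ) (n : ℕ) :
    ∑ l : Fin n → Bool, labelMass κ l * (nOne l - n * κ) = 0 := by
  induction n with
  | zero => simp [labelMass, nOne]
  | succ n ih =>
    rw [sum_bool_succ]
    simp only [labelMass_cons, nOne_cons]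
    refine Eq.trans (Finset.sum_congr rfl fun l _ => ?_) ih
    simp only [if_true, Bool.false_eq_true, if_false, Nat.cast_add, Nat.cast_one]
    ring

lemma labelMass_var (κ : ℝ) (n : ℕ) :
    ∑ l : Fin n → Bool, labelMass κ l * (nOne l - n * κ) ^ 2 = n * (κ * (1 - κ)) := by
  induction n with
  | zero => simp [labelMass, nOne]
  | succ n ih =>
    rw [sum_bool_succ]
    simp only [labelMass_cons, nOne_cons, if_true, Bool.false_eq_true, if_false, zero_add]
    have : ∀ l : Fin n → Bool, κ * labelMass κ l *
          (1 + nOne l - ((n + 1 : ℕ) : ℝ) * κ) ^ 2 +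
        (1 - κ) * labelMass κ l *
          (nOne l - ((n + 1 : ℕ) : ℝ) * κ) ^ 2
        = labelMass κ l * (nOne l - n * κ) ^ 2 + labelMass κ l * (κ * (1 - κ)) := by
      intro l
      push_cast
      ring
    rw [Finset.sum_congr rfl fun l _ => this l, Finset.sum_add_distrib, ih, ← Finset.sum_mul,
      labelMass_sum]
    push_cast
    ring

lemma labelMass_nonneg {κ : ℝ} (h0 : 0 < κ) (h1 : κ < 1) {n : ℕ} (l : Fin n → Bool) :
    0 ≤ labelMass κ l := by
  unfold labelMass
  refine Finset.prod_nonneg fun i _ => ?_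
  split_ifs <;> linarith

open Topology in
/-- Filter of large `n` with typical labels. -/
def labelFilter (κ : ℝ) : Filter (Σ n : ℕ, Fin n → Bool) :=
  comap (fun s => s.1) atTop ⊓ comap (fun s => nOne s.2 / s.1) (𝓝 κ)

open Topology in
lemma label_average {κ : ℝ} (h0 : 0 < κ) (h1 : κ < 1) (F : ∀ n : ℕ, (Fin n → Bool) → ℂ) (z : ℂ)
    (hb : ∀ᶠ n in atTop, ∀ l, ‖F n l‖ ≤ 1)
    (hF : Tendsto (fun s : Σ n : ℕ, Fin n → Bool => F s.1 s.2) (labelFilter κ) (𝓝 z)) :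
    Tendsto (fun n => ∑ l, (labelMass κ l : ℂ) * F n l) atTop (𝓝 z) := by
  rw [Metric.tendsto_atTop]
  intro ε hε
  have h2 : ∀ᶠ s in labelFilter κ, ‖F s.1 s.2 - z‖ < ε / 2 := by
    have := (Metric.tendsto_nhds.1 hF) (ε / 2) (by linarith)
    simpa [dist_eq_norm] using this
  rw [labelFilter, Filter.Eventually,
    ((atTop_basis.comap _).inf (Metric.nhds_basis_ball.comap _)).mem_iff] at h2
  obtain ⟨⟨N, δ⟩, ⟨-, hδ⟩, hsub⟩ := h2
  simp only at hδ hsub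
  obtain ⟨N', hN'⟩ := eventually_atTop.1 hb
  have h3 : Tendsto (fun n : ℕ => (1 + ‖z‖) * (κ * (1 - κ)) / δ ^ 2 / (n : ℝ)) atTop (𝓝 0) :=
    tendsto_const_div_atTop_nhds_zero_nat _
  obtain ⟨N'', hN''⟩ := eventually_atTop.1 (h3.eventually_lt_const (show 0 < ε / 2 by linarith))
  refine ⟨max (max N N') (max N'' 1), fun n hn => ?_⟩
  have hnN : N ≤ n := by simp at hn; omega
  have hnN' : N' ≤ n := by simp at hn; omega
  have hnN'' : N'' ≤ n := by simp at hn; omega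
  have hn1 : 1 ≤ n := by simp at hn; omega
  have hnpos : (0:ℝ) < n := by exact_mod_cast hn1
  have key : ∀ l : Fin n → Bool,
      ‖F n l - z‖ ≤ ε / 2 + (1 + ‖z‖) / (n * δ) ^ 2 * (nOne l - n * κ) ^ 2 := by
    intro l
    by_cases hl : |nOne l / n - κ| < δ
    · have : (⟨n, l⟩ : Σ n : ℕ, Fin n → Bool) ∈ {x | ‖F x.1 x.2 - z‖ < ε / 2} := by
        apply hsub
        refine ⟨hnN, ?_⟩
        simpa [Real.dist_eq] using hl
      have h5 : ‖F n l - z‖ < ε / 2 := this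
      have : 0 ≤ (1 + ‖z‖) / (n * δ) ^ 2 * (nOne l - n * κ) ^ 2 := by positivity
      linarith
    · push Not at hl
      have h5 : ‖F n l - z‖ ≤ 1 + ‖z‖ := (norm_sub_le _ _).trans (by
        have := hN' n hnN' l
        linarith)
      have h6 : (n * δ) ^ 2 ≤ (nOne l - n * κ) ^ 2 := by
        rw [← sq_abs (nOne l - n * κ)]
        have : nOne l - n * κ = n * (nOne l / n - κ) := by field_simp
        rw [this, abs_mul, abs_of_pos hnpos]
        gcongr
      have h7 : 1 + ‖z‖ ≤ (1 + ‖z‖) / (n * δ) ^ 2 * (nOne l - n * κ) ^ 2 := by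
        rw [div_mul_eq_mul_div, le_div_iff₀ (by positivity)]
        gcongr
      linarith
  rw [dist_eq_norm]
  have hz : z = ∑ l : Fin n → Bool, (labelMass κ l : ℂ) * z := by
    rw [← Finset.sum_mul]
    have : (∑ l : Fin n → Bool, (labelMass κ l : ℂ)) = 1 := by exact_mod_cast labelMass_sum κ n
    rw [this, one_mul]
  have h8 : ‖∑ l, (labelMass κ l : ℂ) * F n l - z‖ ≤
      ∑ l : Fin n → Bool, labelMass κ l *
        (ε / 2 + (1 + ‖z‖) / (n * δ) ^ 2 * (nOne l - n * κ) ^ 2) := by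
    conv_lhs => rw [hz, ← Finset.sum_sub_distrib]
    refine norm_sum_le_of_le _ fun l _ => ?_
    rw [← mul_sub, norm_mul, Complex.norm_real, Real.norm_eq_abs,
      abs_of_nonneg (labelMass_nonneg h0 h1 l)]
    exact mul_le_mul_of_nonneg_left (key l) (labelMass_nonneg h0 h1 l)
  refine h8.trans_lt ?_
  have h9 : ∑ l : Fin n → Bool, labelMass κ l *
        (ε / 2 + (1 + ‖z‖) / (n * δ) ^ 2 * (nOne l - n * κ) ^ 2)
      = ε / 2 + (1 + ‖z‖) * (κ * (1 - κ)) / δ ^ 2 / (n : ℝ) := by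
    have : ∀ l : Fin n → Bool, labelMass κ l *
        (ε / 2 + (1 + ‖z‖) / (n * δ) ^ 2 * (nOne l - n * κ) ^ 2)
        = labelMass κ l * (ε / 2) + (1 + ‖z‖) / (n * δ) ^ 2 *
          (labelMass κ l * (nOne l - n * κ) ^ 2) := fun l => by ring
    rw [Finset.sum_congr rfl fun l _ => this l, Finset.sum_add_distrib, ← Finset.sum_mul,
      ← Finset.mul_sum, labelMass_sum, labelMass_var]
    field_simp
  rw [h9]
  have := hN'' n hnN''
  linarith

/-- Ordered pairs `i < j`. -/
abbrev Pr (n : ℕ) : Type := {p : Fin n × Fin n // p.1 < p.2}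

/-- Number of selected pairs. -/
def cnt {n : ℕ} (sel : Fin n → Fin n → Bool) : ℕ :=
  (Finset.univ.filter (fun e : Pr n => sel e.1.1 e.1.2 = true)).card

lemma sum_filter_lt {M : Type*} [AddCommMonoid M] {n : ℕ} (f : Fin n × Fin n → M) :
    ∑ p ∈ Finset.univ.filter (fun p : Fin n × Fin n => p.1 < p.2), f p = ∑ e : Pr n, f e.1 :=
  Finset.sum_subtype _ (by simp) f

lemma prod_filter_lt {M : Type*} [CommMonoid M] {n : ℕ} (f : Fin n × Fin n → M) :
    ∏ p ∈ Finset.univ.filter (fun p : Fin n × Fin n => p.1 < p.2), f p = ∏ e : Pr n, f e.1 :=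
  Finset.prod_subtype _ (by simp) f

lemma pairCard_eq_sum {n : ℕ} (sel : Fin n → Fin n → Bool) :
    pairCard sel = ∑ e : Pr n, if sel e.1.1 e.1.2 then (1:ℝ) else 0 := by
  rw [← sum_filter_lt (fun p => if sel p.1 p.2 then (1:ℝ) else 0), pairCard, ← Finset.filter_filter,
    Finset.sum_boole]

lemma pairCard_eq_cnt {n : ℕ} (sel : Fin n → Fin n → Bool) : pairCard sel = cnt sel := by
  rw [pairCard_eq_sum, cnt, Finset.sum_boole]

lemma sum_symm {n : ℕ} (f : Fin n → Fin n → ℝ) (hf : ∀ i j, f i j = f j i) :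
    ∑ i, ∑ j, f i j = 2 * (∑ e : Pr n, f e.1.1 e.1.2) + ∑ i, f i i := by
  have h1 : ∑ e : Pr n, f e.1.1 e.1.2 = ∑ i, ∑ j, if i < j then f i j else 0 := by
    rw [← sum_filter_lt (fun p => f p.1 p.2), Finset.sum_filter, Fintype.sum_prod_type]
  have h2 : ∑ e : Pr n, f e.1.1 e.1.2 = ∑ i, ∑ j, if j < i then f i j else 0 := by
    rw [h1, Finset.sum_comm]
    refine Finset.sum_congr rfl fun i _ => Finset.sum_congr rfl fun j _ => ?_
    rw [hf]
  have h3 : ∑ i, f i i = ∑ i, ∑ j, if i = j then f i j else 0 := by simp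
  rw [two_mul]
  nth_rewrite 1 [h1]
  rw [h2, h3, ← Finset.sum_add_distrib, ← Finset.sum_add_distrib]
  refine Finset.sum_congr rfl fun i _ => ?_
  rw [← Finset.sum_add_distrib, ← Finset.sum_add_distrib]
  refine Finset.sum_congr rfl fun j _ => ?_
  rcases lt_trichotomy i j with h | h | h
  · simp [h, h.not_gt, h.ne]
  · subst h; simp
  · simp [h, h.not_gt, h.ne']

lemma cnt_within1 {n : ℕ} (l : Fin n → Bool) :
    (cnt (within1 l) : ℝ) = (nOne l ^ 2 - nOne l) / 2 := by
  have h := sum_symm (fun i j => (if l i then (1:ℝ) else 0) * (if l j then (1:ℝ) else 0))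
    (fun i j => mul_comm _ _)
  rw [← Finset.sum_mul_sum] at h
  rw [← pairCard_eq_cnt, pairCard_eq_sum]
  have h1 : ∑ e : Pr n, (if within1 l e.1.1 e.1.2 then (1:ℝ) else 0) =
      ∑ e : Pr n, (if l e.1.1 then (1:ℝ) else 0) * (if l e.1.2 then (1:ℝ) else 0) := by
    refine Finset.sum_congr rfl fun e _ => ?_
    cases h1 : l e.1.1 <;> cases h2 : l e.1.2 <;> simp [within1, h1, h2]
  have h2 : ∑ i, (if l i then (1:ℝ) else 0) * (if l i then (1:ℝ) else 0) = nOne l := by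
    refine Finset.sum_congr rfl fun e _ => ?_
    split_ifs <;> simp
  rw [h1]
  rw [h2] at h
  change nOne l * nOne l = _ at h
  linarith

lemma nOne_compl {n : ℕ} (l : Fin n → Bool) : nOne (fun i => !(l i)) = n - nOne l := by
  have : nOne (fun i => !(l i)) + nOne l = n := by
    rw [nOne, nOne, ← Finset.sum_add_distrib]
    have : ∀ i : Fin n, (if (!(l i)) = true then (1:ℝ) else 0) + (if l i = true then 1 else 0) = 1 := by
      intro i
      cases l i <;> simp
    rw [Finset.sum_congr rfl fun i _ => this i]
    simp
  linarith

lemma cnt_within2 {n : ℕ} (l : Fin n → Bool) :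
    (cnt (within2 l) : ℝ) = ((n - nOne l) ^ 2 - (n - nOne l)) / 2 := by
  have : within2 l = within1 (fun i => !(l i)) := rfl
  rw [this, cnt_within1, nOne_compl]

lemma cnt_between {n : ℕ} (l : Fin n → Bool) :
    (cnt (between l) : ℝ) = nOne l * (n - nOne l) := by
  have h := sum_symm (fun i j => (if l i then (1:ℝ) else 0) * (if !(l j) then (1:ℝ) else 0)
    + (if !(l i) then (1:ℝ) else 0) * (if l j then (1:ℝ) else 0))
    (fun i j => by ring)
  simp only [Finset.sum_add_distrib] at h
  rw [← Finset.sum_mul_sum, ← Finset.sum_mul_sum] at h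
  rw [← pairCard_eq_cnt, pairCard_eq_sum]
  have h1 : ∑ e : Pr n, (if between l e.1.1 e.1.2 then (1:ℝ) else 0) =
      ∑ e : Pr n, (if l e.1.1 then (1:ℝ) else 0) * (if !(l e.1.2) then (1:ℝ) else 0)
      + ∑ e : Pr n, (if !(l e.1.1) then (1:ℝ) else 0) * (if l e.1.2 then (1:ℝ) else 0) := by
    rw [← Finset.sum_add_distrib]
    refine Finset.sum_congr rfl fun e _ => ?_
    cases h1 : l e.1.1 <;> cases h2 : l e.1.2 <;> simp [between, h1, h2]
  have h2 : ∑ i, (if l i then (1:ℝ) else 0) * (if !(l i) then (1:ℝ) else 0) = 0 := by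
    refine Finset.sum_eq_zero fun e _ => ?_
    cases l e <;> simp
  have h3 : ∑ i, (if !(l i) then (1:ℝ) else 0) * (if l i then (1:ℝ) else 0) = 0 := by
    refine Finset.sum_eq_zero fun e _ => ?_
    cases l e <;> simp
  rw [h1]
  rw [h2, h3] at h
  change nOne l * nOne (fun i => !(l i)) + nOne (fun i => !(l i)) * nOne l = _ at h
  rw [nOne_compl] at h
  linarith

open Topology in
lemma fst_tendsto (κ : ℝ) : Tendsto (fun s : Σ n : ℕ, Fin n → Bool => s.1) (labelFilter κ) atTop :=
  tendsto_comap.mono_left inf_le_left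

open Topology in
lemma frac_tendsto (κ : ℝ) :
    Tendsto (fun s : Σ n : ℕ, Fin n → Bool => nOne s.2 / s.1) (labelFilter κ) (𝓝 κ) :=
  tendsto_comap.mono_left inf_le_right

open Topology in
lemma fst_inv_tendsto (κ : ℝ) : Tendsto (fun s : Σ n : ℕ, Fin n → Bool => ((s.1 : ℝ))⁻¹)
    (labelFilter κ) (𝓝 0) :=
  (tendsto_inv_atTop_nhds_zero_nat (𝕜 := ℝ)).comp (fst_tendsto κ)

lemma fst_pos (κ : ℝ) : ∀ᶠ s : Σ n : ℕ, Fin n → Bool in labelFilter κ, (0:ℝ) < s.1 := by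
  filter_upwards [(fst_tendsto κ).eventually_ge_atTop 1] with s hs
  exact_mod_cast hs

open Topology in
lemma cnt_within1_tendsto (κ : ℝ) : Tendsto (fun s : Σ n : ℕ, Fin n → Bool =>
    (cnt (within1 s.2) : ℝ) / (s.1 : ℝ) ^ 2) (labelFilter κ) (𝓝 (κ ^ 2 / 2)) := by
  have h := (((frac_tendsto κ).pow 2).sub ((frac_tendsto κ).mul (fst_inv_tendsto κ))).div_const 2
  rw [mul_zero, sub_zero] at h
  refine h.congr' ?_
  filter_upwards [fst_pos κ] with s hs
  rw [cnt_within1]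
  field_simp

open Topology in
lemma cnt_within2_tendsto (κ : ℝ) : Tendsto (fun s : Σ n : ℕ, Fin n → Bool =>
    (cnt (within2 s.2) : ℝ) / (s.1 : ℝ) ^ 2) (labelFilter κ) (𝓝 ((1 - κ) ^ 2 / 2)) := by
  have h0 := (frac_tendsto κ).const_sub 1
  have h := ((h0.pow 2).sub (h0.mul (fst_inv_tendsto κ))).div_const 2
  rw [mul_zero, sub_zero] at h
  refine h.congr' ?_
  filter_upwards [fst_pos κ] with s hs
  rw [cnt_within2]
  field_simp

open Topology in
lemma cnt_between_tendsto (κ : ℝ) : Tendsto (fun s : Σ n : ℕ, Fin n → Bool =>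
    (cnt (between s.2) : ℝ) / (s.1 : ℝ) ^ 2) (labelFilter κ) (𝓝 (κ * (1 - κ))) := by
  have h := (frac_tendsto κ).mul ((frac_tendsto κ).const_sub 1)
  refine h.congr' ?_
  filter_upwards [fst_pos κ] with s hs
  rw [cnt_between]
  field_simp

open Topology in
/-- Consequences of `N/n² → a > 0`. -/
lemma scale_facts {κ a : ℝ} (ha : 0 < a) {N : (Σ n : ℕ, Fin n → Bool) → ℕ}
    (h : Tendsto (fun s => (N s : ℝ) / (s.1 : ℝ) ^ 2) (labelFilter κ) (𝓝 a)) :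
    Tendsto N (labelFilter κ) atTop ∧
    Tendsto (fun s => (s.1 : ℝ) / N s) (labelFilter κ) (𝓝 0) ∧
    Tendsto (fun s => (N s : ℝ) * ((s.1 : ℝ) / N s) ^ 2) (labelFilter κ) (𝓝 a⁻¹) := by
  have hn : Tendsto (fun s : Σ n : ℕ, Fin n → Bool => (s.1 : ℝ) ^ 2) (labelFilter κ) atTop :=
    (tendsto_pow_atTop (two_ne_zero)).comp (tendsto_natCast_atTop_atTop.comp (fst_tendsto κ))
  have hN : Tendsto N (labelFilter κ) atTop := by
    rw [← tendsto_natCast_atTop_iff (R := ℝ)]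
    refine (h.pos_mul_atTop ha hn).congr' ?_
    filter_upwards [fst_pos κ] with s hs
    field_simp
  have hNpos : ∀ᶠ s in labelFilter κ, (0:ℝ) < N s := by
    filter_upwards [hN.eventually_ge_atTop 1] with s hs
    exact_mod_cast hs
  have hi := h.inv₀ ha.ne'
  refine ⟨hN, ?_, ?_⟩
  · have := hi.mul (fst_inv_tendsto κ)
    rw [mul_zero] at this
    refine this.congr' ?_
    filter_upwards [fst_pos κ, hNpos] with s hs hs'
    field_simp
  · refine hi.congr' ?_
    filter_upwards [fst_pos κ, hNpos] with s hs hs'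
    field_simp

/-- Class-dependent value. -/
def sel3 {α : Type*} (x₁ x₂ xb : α) : Bool → Bool → α :=
  fun x y => if x then (if y then x₁ else xb) else (if y then xb else x₂)

lemma prod_sel3 {n : ℕ} (l : Fin n → Bool) (x₁ x₂ xb : ℂ) :
    ∏ e : Pr n, sel3 x₁ x₂ xb (l e.1.1) (l e.1.2) =
      x₁ ^ cnt (within1 l) * x₂ ^ cnt (within2 l) * xb ^ cnt (between l) := by
  have h : ∀ e : Pr n, sel3 x₁ x₂ xb (l e.1.1) (l e.1.2) =
      (if within1 l e.1.1 e.1.2 = true then x₁ else 1) *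
      (if within2 l e.1.1 e.1.2 = true then x₂ else 1) *
      (if between l e.1.1 e.1.2 = true then xb else 1) := by
    intro e
    cases h1 : l e.1.1 <;> cases h2 : l e.1.2 <;> simp [sel3, within1, within2, between, h1, h2]
  simp only [h, Finset.prod_mul_distrib, cnt, ← Finset.prod_filter, Finset.prod_const]

/-- Symmetric loopless matrix from its values on pairs. -/
def toMat {n : ℕ} (f : Pr n → Bool) : Fin n → Fin n → Bool := fun i j =>
  if h : i < j then f ⟨(i, j), h⟩ else if h : j < i then f ⟨(j, i), h⟩ else false

lemma toMat_apply {n : ℕ} (f : Pr n → Bool) (e : Pr n) : toMat f e.1.1 e.1.2 = f e := by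
  simp [toMat, e.2]

lemma toMat_symm {n : ℕ} (f : Pr n → Bool) (i j : Fin n) : toMat f i j = toMat f j i := by
  unfold toMat
  rcases lt_trichotomy i j with h | h | h
  · simp [h, h.not_gt]
  · subst h; rfl
  · simp [h, h.not_gt]

lemma toMat_loop {n : ℕ} (f : Pr n → Bool) (i : Fin n) : toMat f i i = false := by
  simp [toMat]

lemma eq_toMat {n : ℕ} (m : Fin n → Fin n → Bool) (hs : ∀ i j, m i j = m j i)
    (hl : ∀ i, m i i = false) : m = toMat (fun e : Pr n => m e.1.1 e.1.2) := by
  funext i j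
  unfold toMat
  rcases lt_trichotomy i j with h | h | h
  · simp [h]
  · subst h; simp [hl]
  · simp [h, h.not_gt, hs i j]

/-- Conditional mass given labels. -/
def pairMass {n : ℕ} (B βm : Bool → Bool → ℝ) (l : Fin n → Bool)
    (x : Pr n → Bool × Bool × Bool) : ℝ :=
  ∏ e : Pr n, wgt (B (l e.1.1) (l e.1.2)) (βm (l e.1.1) (l e.1.2)) (x e)

lemma sum_pi_prod {R : Type*} [CommSemiring R] {n : ℕ} (g : Pr n → Bool × Bool × Bool → R) :
    ∑ x : Pr n → Bool × Bool × Bool, ∏ e, g e (x e) = ∏ e, ∑ y, g e y := by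
  rw [Finset.prod_univ_sum, Fintype.piFinset_univ]

lemma pairMass_sum {n : ℕ} (B βm : Bool → Bool → ℝ) (l : Fin n → Bool) :
    ∑ x, pairMass B βm l x = 1 := by
  unfold pairMass
  rw [sum_pi_prod (fun e y => wgt (B (l e.1.1) (l e.1.2)) (βm (l e.1.1) (l e.1.2)) y)]
  simp [wgt_sum]

/-- Configurations. -/
abbrev Conf (n : ℕ) : Type := (Fin n → Bool) × (Pr n → Bool × Bool × Bool)

/-- Configuration mass. -/
def confMass {n : ℕ} (κ : ℝ) (B βm : Bool → Bool → ℝ) (k : Conf n) : ℝ :=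
  labelMass κ k.1 * pairMass B βm k.1 k.2

lemma confMass_sum {n : ℕ} (κ : ℝ) (B βm : Bool → Bool → ℝ) :
    ∑ k : Conf n, confMass κ B βm k = 1 := by
  rw [Fintype.sum_prod_type]
  simp only [confMass, ← Finset.mul_sum, pairMass_sum, mul_one, labelMass_sum]

/-- Observed configuration. -/
def conf {Ω : Type*} {n : ℕ} (c : Ω → Fin n → Bool) (A Y Y' : Ω → Fin n → Fin n → Bool)
    (ω : Ω) : Conf n :=
  (c ω, fun e => (A ω e.1.1 e.1.2, Y ω e.1.1 e.1.2, Y' ω e.1.1 e.1.2))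

lemma conf_law {Ω : Type*} [MeasurableSpace Ω] {P : Measure Ω} {n : ℕ}
    {B βm : Bool → Bool → ℝ} {κ : ℝ} {c : Ω → Fin n → Bool} {A Y Y' : Ω → Fin n → Fin n → Bool}
    (h : IsObsSBM P n B βm κ c A Y Y') (k : Conf n) :
    P {ω | conf c A Y Y' ω = k} = ENNReal.ofReal (confMass κ B βm k) := by
  obtain ⟨l, x⟩ := k
  have h1 := h.law l (toMat fun e => (x e).1) (toMat fun e => (x e).2.1) (toMat fun e => (x e).2.2)
    (toMat_symm _) (toMat_loop _) (toMat_symm _) (toMat_loop _) (toMat_symm _) (toMat_loop _)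
  have h2 : {ω | conf c A Y Y' ω = (l, x)} = {ω | c ω = l ∧ A ω = (toMat fun e => (x e).1) ∧
      Y ω = (toMat fun e => (x e).2.1) ∧ Y' ω = (toMat fun e => (x e).2.2)} := by
    ext ω
    simp only [conf, Set.mem_ofPred_eq, Prod.mk.injEq]
    constructor
    · rintro ⟨rfl, rfl⟩
      exact ⟨rfl, eq_toMat _ (h.symmA ω) (h.looplessA ω), eq_toMat _ (h.symmY ω) (h.looplessY ω),
        eq_toMat _ (h.symmY' ω) (h.looplessY' ω)⟩
    · rintro ⟨h1, h2, h3, h4⟩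
      refine ⟨h1, ?_⟩
      funext e
      rw [h2, h3, h4, toMat_apply, toMat_apply, toMat_apply]
  rw [h2, h1, edgeMass, obsMass, obsMass, prod_filter_lt, prod_filter_lt, prod_filter_lt]
  simp only [toMat_apply]
  rw [mul_assoc, mul_assoc, ← Finset.prod_mul_distrib, ← Finset.prod_mul_distrib]
  simp only [confMass, pairMass, wgt, mul_assoc]

/-- Law on the line of a discrete weighted family. -/
def discLaw {K : Type*} [Fintype K] (m : K → ℝ) (Z : K → ℝ) : Measure ℝ :=
  ∑ k, ENNReal.ofReal (m k) • Measure.dirac (Z k)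

lemma discLaw_apply {K : Type*} [Fintype K] (m : K → ℝ) (Z : K → ℝ) {S : Set ℝ}
    (hS : MeasurableSet S) :
    discLaw m Z S = ∑ k, ENNReal.ofReal (m k) * S.indicator 1 (Z k) := by
  simp [discLaw, Measure.finsetSum_apply, Measure.dirac_apply' _ hS]

lemma discLaw_prob {K : Type*} [Fintype K] {m : K → ℝ} (Z : K → ℝ) (hm : ∀ k, 0 ≤ m k)
    (hs : ∑ k, m k = 1) : IsProbabilityMeasure (discLaw m Z) := by
  constructor
  rw [discLaw_apply _ _ MeasurableSet.univ]
  simp only [Set.indicator_univ, Pi.one_apply, mul_one]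
  rw [← ENNReal.ofReal_sum_of_nonneg fun k _ => hm k, hs, ENNReal.ofReal_one]

lemma discLaw_charFun {K : Type*} [Fintype K] {m : K → ℝ} (Z : K → ℝ) (hm : ∀ k, 0 ≤ m k) (s : ℝ) :
    charFun (discLaw m Z) s = ∑ k, (m k : ℂ) * Complex.exp ((s * Z k : ℝ) * Complex.I) := by
  rw [charFun_apply_real, discLaw, integral_finsetSum_measure]
  · refine Finset.sum_congr rfl fun k _ => ?_
    rw [integral_smul_measure, integral_dirac, ENNReal.toReal_ofReal (hm k)]
    simp
  · intro k _
    refine Integrable.smul_measure ?_ ENNReal.ofReal_ne_top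
    exact integrable_dirac (by simp)

lemma finite_law {Ω K : Type*} [MeasurableSpace Ω] [Fintype K] {P : Measure Ω}
    (hP : IsProbabilityMeasure P) (f : Ω → K) {m : K → ℝ} (hm : ∀ k, 0 ≤ m k)
    (hs : ∑ k, m k = 1) (h : ∀ k, P {ω | f ω = k} = ENNReal.ofReal (m k))
    (Z : K → ℝ) {S : Set ℝ} (hS : MeasurableSet S) :
    P {ω | Z (f ω) ∈ S} = discLaw m Z S := by
  have hle : ∀ T : Set ℝ, MeasurableSet T → P {ω | Z (f ω) ∈ T} ≤ discLaw m Z T := by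
    classical
    intro T hT
    rw [discLaw_apply _ _ hT]
    have h1 : {ω | Z (f ω) ∈ T} ⊆
        ⋃ k ∈ Finset.univ.filter (fun k => Z k ∈ T), {ω | f ω = k} := by
      intro ω hω
      simp only [Set.mem_iUnion]
      exact ⟨f ω, by simpa using hω, rfl⟩
    refine (measure_mono h1).trans ((measure_biUnion_finset_le _ _).trans ?_)
    rw [Finset.sum_filter]
    refine Finset.sum_le_sum fun k _ => ?_
    by_cases hk : Z k ∈ T
    · simp [hk, h]
    · simp [hk]
  have hpr := discLaw_prob Z hm hs
  refine le_antisymm (hle S hS) ?_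
  have h1 := hle Sᶜ hS.compl
  have h2 : (1 : ENNReal) ≤ P {ω | Z (f ω) ∈ S} + P {ω | Z (f ω) ∈ Sᶜ} := by
    rw [← hP.measure_univ]
    refine (measure_mono ?_).trans (measure_union_le _ _)
    intro ω _
    by_cases hω : Z (f ω) ∈ S
    · exact Or.inl hω
    · exact Or.inr hω
  have h3 : discLaw m Z S + discLaw m Z Sᶜ = 1 := prob_add_prob_compl hS
  have h4 : discLaw m Z S + discLaw m Z Sᶜ ≤ P {ω | Z (f ω) ∈ S} + discLaw m Z Sᶜ := by
    rw [h3]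
    exact h2.trans (by gcongr)
  exact (ENNReal.add_le_add_iff_right (measure_ne_top _ _)).1 h4

open Topology in
lemma cdf_tendsto (ν : ℕ → Measure ℝ) (hν : ∀ᶠ n in atTop, IsProbabilityMeasure (ν n))
    {V : ℝ} (hV : 0 < V)
    (hc : ∀ s : ℝ, Tendsto (fun n => charFun (ν n) s) atTop
      (𝓝 (Complex.exp ((-(s ^ 2 * V) / 2 : ℝ))))) (x : ℝ) :
    Tendsto (fun n => ν n (Set.Iic x)) atTop
      (𝓝 (gaussianReal 0 (Real.toNNReal V) (Set.Iic x))) := by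
  classical
  let μ : ℕ → ProbabilityMeasure ℝ := fun n =>
    if h : IsProbabilityMeasure (ν n) then ⟨ν n, h⟩ else ⟨Measure.dirac 0, inferInstance⟩
  have hμ : ∀ᶠ n in atTop, (μ n : Measure ℝ) = ν n := by
    filter_upwards [hν] with n hn
    simp [μ, hn]
  let g : ProbabilityMeasure ℝ := ⟨gaussianReal 0 (Real.toNNReal V), inferInstance⟩
  have hw : Tendsto μ atTop (𝓝 g) := by
    apply ProbabilityMeasure.tendsto_of_tendsto_charFun
    intro s
    have e : charFun (g : Measure ℝ) s = Complex.exp ((-(s ^ 2 * V) / 2 : ℝ)) := by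
      change charFun (gaussianReal 0 (Real.toNNReal V)) s = _
      rw [charFun_gaussianReal]
      congr 1
      simp only [Real.coe_toNNReal V hV.le]
      push_cast
      ring
    rw [e]
    refine (hc s).congr' ?_
    filter_upwards [hμ] with n hn
    rw [hn]
  have h0 : (g : Measure ℝ) (frontier (Set.Iic x)) = 0 := by
    rw [frontier_Iic]
    change gaussianReal 0 (Real.toNNReal V) {x} = 0
    have := nullSingletonClass_gaussianReal (μ := 0) (v := Real.toNNReal V) (by simpa using hV)
    exact measure_singleton x
  have := ProbabilityMeasure.tendsto_measure_of_null_frontier_of_tendsto' hw h0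
  refine this.congr' ?_
  filter_upwards [hμ] with n hn
  rw [hn]

lemma ratio_sub {n : ℕ} (cls g : Fin n → Fin n → Bool) (p r : ℝ) (h : (cnt cls : ℝ) ≠ 0) :
    (n : ℝ) * (pairCard (fun i j => cls i j && g i j) / (r * pairCard cls) - p) =
      ∑ e : Pr n, if cls e.1.1 e.1.2 = true then
        (n / (cnt cls : ℝ)) * ((if g e.1.1 e.1.2 = true then 1 else 0) / r - p) else 0 := by
  have h1 : ∀ e : Pr n, (if cls e.1.1 e.1.2 = true then
        (n / (cnt cls : ℝ)) * ((if g e.1.1 e.1.2 = true then 1 else 0) / r - p) else 0)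
      = (n / (cnt cls : ℝ)) / r * (if (cls e.1.1 e.1.2 && g e.1.1 e.1.2) = true then 1 else 0)
        - (n / (cnt cls : ℝ)) * p * (if cls e.1.1 e.1.2 = true then 1 else 0) := by
    intro e
    cases cls e.1.1 e.1.2 <;> cases g e.1.1 e.1.2 <;> simp
    ring
  rw [Finset.sum_congr rfl fun e _ => h1 e, Finset.sum_sub_distrib, ← Finset.mul_sum,
    ← Finset.mul_sum, ← pairCard_eq_sum cls,
    ← pairCard_eq_sum (fun i j => cls i j && g i j), pairCard_eq_cnt cls]
  field_simp

lemma class_sum {n : ℕ} (cls y y' : Fin n → Fin n → Bool) (B b t₁ t₂ : ℝ)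
    (x : Pr n → Bool × Bool × Bool)
    (hy : ∀ e : Pr n, y e.1.1 e.1.2 = (x e).2.1) (hy' : ∀ e : Pr n, y' e.1.1 e.1.2 = (x e).2.2)
    (h : (cnt cls : ℝ) ≠ 0) :
    t₁ * ((n : ℝ) * (u1hat cls y - (1 - b) * B)) +
      t₂ * ((n : ℝ) * (u2hat cls y y' - b * ((1 - b) * B))) =
    ∑ e : Pr n, if cls e.1.1 e.1.2 = true then
      (n / (cnt cls : ℝ)) * dst B b t₁ t₂ (x e) else 0 := by
  have h1 := ratio_sub cls y ((1 - b) * B) 1 h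
  have h2 := ratio_sub cls (fun i j => y i j != y' i j) (b * ((1 - b) * B)) 2 h
  rw [one_mul] at h1
  unfold u1hat u2hat
  rw [h1, h2, Finset.mul_sum, Finset.mul_sum, ← Finset.sum_add_distrib]
  refine Finset.sum_congr rfl fun e _ => ?_
  by_cases hc : cls e.1.1 e.1.2 = true
  · simp only [hc, if_true, dst, hy, hy', div_one]
    ring
  · simp [hc]

/-- The linear statistic as a function of the configuration. -/
def Zconf {n : ℕ} (q β μ₁ μ₂ γ₁ γ₂ : ℝ) (t : Fin 6 → ℝ) (k : Conf n) : ℝ :=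
  ∑ j, t j * obsVec q β μ₁ μ₂ γ₁ γ₂ k.1 (toMat fun e => (k.2 e).2.1) (toMat fun e => (k.2 e).2.2) j

lemma Zconf_eq {n : ℕ} (q β μ₁ μ₂ γ₁ γ₂ : ℝ) (t : Fin 6 → ℝ) (l : Fin n → Bool)
    (x : Pr n → Bool × Bool × Bool)
    (h1 : (cnt (within1 l) : ℝ) ≠ 0) (h2 : (cnt (within2 l) : ℝ) ≠ 0)
    (hb : (cnt (between l) : ℝ) ≠ 0) :
    Zconf q β μ₁ μ₂ γ₁ γ₂ t (l, x) = ∑ e : Pr n,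
      sel3 (n / (cnt (within1 l) : ℝ) *
          dst (q + μ₁ / Real.sqrt n) (β - γ₁ / Real.sqrt n) (t 0) (t 1) (x e))
        (n / (cnt (within2 l) : ℝ) *
          dst (q + μ₂ / Real.sqrt n) (β - γ₂ / Real.sqrt n) (t 2) (t 3) (x e))
        (n / (cnt (between l) : ℝ) * dst q β (t 4) (t 5) (x e))
        (l e.1.1) (l e.1.2) := by
  have e1 := class_sum (within1 l) (toMat fun e => (x e).2.1) (toMat fun e => (x e).2.2)
    (q + μ₁ / Real.sqrt n) (β - γ₁ / Real.sqrt n) (t 0) (t 1) x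
    (fun e => toMat_apply _ e) (fun e => toMat_apply _ e) h1
  have e2 := class_sum (within2 l) (toMat fun e => (x e).2.1) (toMat fun e => (x e).2.2)
    (q + μ₂ / Real.sqrt n) (β - γ₂ / Real.sqrt n) (t 2) (t 3) x
    (fun e => toMat_apply _ e) (fun e => toMat_apply _ e) h2
  have e3 := class_sum (between l) (toMat fun e => (x e).2.1) (toMat fun e => (x e).2.2)
    q β (t 4) (t 5) x
    (fun e => toMat_apply _ e) (fun e => toMat_apply _ e) hb
  have e4 : ∀ a c : ℝ, 1 - (a - c) = 1 - a + c := fun a c => by ring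
  rw [e4] at e1 e2
  have e5 : ∀ e : Pr n, sel3 (n / (cnt (within1 l) : ℝ) *
          dst (q + μ₁ / Real.sqrt n) (β - γ₁ / Real.sqrt n) (t 0) (t 1) (x e))
        (n / (cnt (within2 l) : ℝ) *
          dst (q + μ₂ / Real.sqrt n) (β - γ₂ / Real.sqrt n) (t 2) (t 3) (x e))
        (n / (cnt (between l) : ℝ) * dst q β (t 4) (t 5) (x e))
        (l e.1.1) (l e.1.2) =
      (if within1 l e.1.1 e.1.2 = true then n / (cnt (within1 l) : ℝ) *
          dst (q + μ₁ / Real.sqrt n) (β - γ₁ / Real.sqrt n) (t 0) (t 1) (x e) else 0) +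
      (if within2 l e.1.1 e.1.2 = true then n / (cnt (within2 l) : ℝ) *
          dst (q + μ₂ / Real.sqrt n) (β - γ₂ / Real.sqrt n) (t 2) (t 3) (x e) else 0) +
      (if between l e.1.1 e.1.2 = true then
        n / (cnt (between l) : ℝ) * dst q β (t 4) (t 5) (x e) else 0) := by
    intro e
    cases h1 : l e.1.1 <;> cases h2 : l e.1.2 <;> simp [sel3, within1, within2, between, h1, h2]
  rw [Finset.sum_congr rfl fun e _ => e5 e, Finset.sum_add_distrib, Finset.sum_add_distrib,
    ← e1, ← e2, ← e3]
  simp only [Zconf, Fin.sum_univ_six, obsVec]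
  simp only [Matrix.cons_val]
  ring

/-- Conditional characteristic function given the labels. -/
def condChar (q β μ₁ μ₂ γ₁ γ₂ : ℝ) (t : Fin 6 → ℝ) (s : ℝ) (n : ℕ) (l : Fin n → Bool) : ℂ :=
  ∑ x, (pairMass (sbmB (q + μ₁ / Real.sqrt n) (q + μ₂ / Real.sqrt n) q)
        (sbmB (β - γ₁ / Real.sqrt n) (β - γ₂ / Real.sqrt n) β) l x : ℂ) *
    Complex.exp ((s * Zconf q β μ₁ μ₂ γ₁ γ₂ t (l, x) : ℝ) * Complex.I)

lemma dst_smul (B b t₁ t₂ s θ : ℝ) (x) :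
    θ * dst B b (s * t₁) (s * t₂) x = s * (θ * dst B b t₁ t₂ x) := by
  unfold dst; ring

lemma condChar_eq (q β μ₁ μ₂ γ₁ γ₂ : ℝ) (t : Fin 6 → ℝ) (s : ℝ) (n : ℕ) (l : Fin n → Bool)
    (h1 : (cnt (within1 l) : ℝ) ≠ 0) (h2 : (cnt (within2 l) : ℝ) ≠ 0)
    (hb : (cnt (between l) : ℝ) ≠ 0) :
    condChar q β μ₁ μ₂ γ₁ γ₂ t s n l =
      phi (q + μ₁ / Real.sqrt n) (β - γ₁ / Real.sqrt n) (s * t 0) (s * t 1)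
        (n / (cnt (within1 l) : ℝ)) ^ cnt (within1 l) *
      phi (q + μ₂ / Real.sqrt n) (β - γ₂ / Real.sqrt n) (s * t 2) (s * t 3)
        (n / (cnt (within2 l) : ℝ)) ^ cnt (within2 l) *
      phi q β (s * t 4) (s * t 5) (n / (cnt (between l) : ℝ)) ^ cnt (between l) := by
  rw [← prod_sel3]
  have e0 : ∀ e : Pr n, sel3
      (phi (q + μ₁ / Real.sqrt n) (β - γ₁ / Real.sqrt n) (s * t 0) (s * t 1)
        (n / (cnt (within1 l) : ℝ)))
      (phi (q + μ₂ / Real.sqrt n) (β - γ₂ / Real.sqrt n) (s * t 2) (s * t 3)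
        (n / (cnt (within2 l) : ℝ)))
      (phi q β (s * t 4) (s * t 5) (n / (cnt (between l) : ℝ))) (l e.1.1) (l e.1.2) =
      ∑ y, (wgt (sbmB (q + μ₁ / Real.sqrt n) (q + μ₂ / Real.sqrt n) q (l e.1.1) (l e.1.2))
          (sbmB (β - γ₁ / Real.sqrt n) (β - γ₂ / Real.sqrt n) β (l e.1.1) (l e.1.2)) y : ℂ) *
        Complex.exp ((s * sel3 (n / (cnt (within1 l) : ℝ) *
          dst (q + μ₁ / Real.sqrt n) (β - γ₁ / Real.sqrt n) (t 0) (t 1) y)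
        (n / (cnt (within2 l) : ℝ) *
          dst (q + μ₂ / Real.sqrt n) (β - γ₂ / Real.sqrt n) (t 2) (t 3) y)
        (n / (cnt (between l) : ℝ) * dst q β (t 4) (t 5) y)
        (l e.1.1) (l e.1.2) : ℝ) * Complex.I) := by
    intro e
    cases l e.1.1 <;> cases l e.1.2 <;> simp only [sel3, sbmB, phi, dst_smul, if_true,
      Bool.false_eq_true, if_false]
  rw [Finset.prod_congr rfl fun e _ => e0 e, ← sum_pi_prod]
  unfold condChar
  refine Finset.sum_congr rfl fun x _ => ?_
  rw [Finset.prod_mul_distrib, ← Complex.exp_sum, pairMass, Zconf_eq _ _ _ _ _ _ _ _ _ h1 h2 hb]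
  push_cast
  rw [Finset.mul_sum, Finset.sum_mul]

lemma quadU_smul (B b s t₁ t₂ : ℝ) : quadU B b (s * t₁) (s * t₂) = s ^ 2 * quadU B b t₁ t₂ := by
  unfold quadU; ring

/-- Limiting variance. -/
def Vlim (κ q β : ℝ) (t : Fin 6 → ℝ) : ℝ :=
  (κ ^ 2 / 2)⁻¹ * quadU q β (t 0) (t 1) + ((1 - κ) ^ 2 / 2)⁻¹ * quadU q β (t 2) (t 3) +
    (κ * (1 - κ))⁻¹ * quadU q β (t 4) (t 5)

open Topology in
lemma par_tendsto (q μ : ℝ) : Tendsto (fun n : ℕ => q + μ / Real.sqrt n) atTop (𝓝 q) := by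
  have h : Tendsto (fun n : ℕ => Real.sqrt n) atTop atTop :=
    Real.tendsto_sqrt_atTop.comp tendsto_natCast_atTop_atTop
  have := (h.const_div_atTop μ).const_add q
  simpa using this

open Topology in
lemma par_tendsto' (q μ : ℝ) : Tendsto (fun n : ℕ => q - μ / Real.sqrt n) atTop (𝓝 q) := by
  have := par_tendsto q (-μ)
  refine this.congr fun n => by ring

open Topology in
lemma condChar_tendsto {κ : ℝ} (h0 : 0 < κ) (h1 : κ < 1) (q β μ₁ μ₂ γ₁ γ₂ : ℝ)
    (t : Fin 6 → ℝ) (s : ℝ) :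
    Tendsto (fun p : Σ n : ℕ, Fin n → Bool => condChar q β μ₁ μ₂ γ₁ γ₂ t s p.1 p.2)
      (labelFilter κ) (𝓝 (Complex.exp ((-(s ^ 2 * Vlim κ q β t) / 2 : ℝ)))) := by
  have hk : 0 < 1 - κ := by linarith
  obtain ⟨a1, a2, a3⟩ := scale_facts (by positivity) (cnt_within1_tendsto κ)
  obtain ⟨b1, b2, b3⟩ := scale_facts (by positivity) (cnt_within2_tendsto κ)
  obtain ⟨c1, c2, c3⟩ := scale_facts (by positivity) (cnt_between_tendsto κ)
  have p1 := phi_tendsto (s * t 0) (s * t 1) ((par_tendsto q μ₁).comp (fst_tendsto κ))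
    ((par_tendsto' β γ₁).comp (fst_tendsto κ)) a2 a1 a3
  have p2 := phi_tendsto (s * t 2) (s * t 3) ((par_tendsto q μ₂).comp (fst_tendsto κ))
    ((par_tendsto' β γ₂).comp (fst_tendsto κ)) b2 b1 b3
  have p3 := phi_tendsto (s * t 4) (s * t 5) (tendsto_const_nhds (x := q))
    (tendsto_const_nhds (x := β)) c2 c1 c3
  have p := (p1.mul p2).mul p3
  rw [← Complex.exp_add, ← Complex.exp_add] at p
  have e : ((-(s ^ 2 * Vlim κ q β t) / 2 : ℝ) : ℂ) =
      ((-((κ ^ 2 / 2)⁻¹ * quadU q β (s * t 0) (s * t 1)) / 2 : ℝ) : ℂ) +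
      ((-(((1 - κ) ^ 2 / 2)⁻¹ * quadU q β (s * t 2) (s * t 3)) / 2 : ℝ) : ℂ) +
      ((-((κ * (1 - κ))⁻¹ * quadU q β (s * t 4) (s * t 5)) / 2 : ℝ) : ℂ) := by
    rw [← Complex.ofReal_add, ← Complex.ofReal_add]
    congr 1
    simp only [quadU_smul, Vlim]
    ring
  rw [e]
  refine p.congr' ?_
  filter_upwards [a1.eventually_ge_atTop 1, b1.eventually_ge_atTop 1,
    c1.eventually_ge_atTop 1] with r h1 h2 h3
  rw [condChar_eq]
  · rfl
  · exact_mod_cast (by omega : cnt (within1 r.2) ≠ 0)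
  · exact_mod_cast (by omega : cnt (within2 r.2) ≠ 0)
  · exact_mod_cast (by omega : cnt (between r.2) ≠ 0)

lemma sbmB_mem {S : Set ℝ} {x₁ x₂ xb : ℝ} (h1 : x₁ ∈ S) (h2 : x₂ ∈ S) (hb : xb ∈ S) (x y : Bool) :
    sbmB x₁ x₂ xb x y ∈ S := by
  unfold sbmB
  split_ifs <;> assumption

lemma pairMass_nonneg {n : ℕ} {B βm : Bool → Bool → ℝ} (hB : ∀ x y, B x y ∈ Set.Icc (0:ℝ) 1)
    (hb : ∀ x y, βm x y ∈ Set.Icc (0:ℝ) 1) (l : Fin n → Bool) (x) : 0 ≤ pairMass B βm l x :=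
  Finset.prod_nonneg fun _ _ => wgt_nonneg (hB _ _) (hb _ _) _

lemma par_mem {q : ℝ} (hq0 : 0 < q) (hq1 : q < 1) (μ : ℝ) :
    ∀ᶠ n : ℕ in atTop, q + μ / Real.sqrt n ∈ Set.Icc (0:ℝ) 1 :=
  (par_tendsto q μ).eventually (Icc_mem_nhds hq0 hq1)

lemma par_mem' {q : ℝ} (hq0 : 0 < q) (hq1 : q < 1) (μ : ℝ) :
    ∀ᶠ n : ℕ in atTop, q - μ / Real.sqrt n ∈ Set.Icc (0:ℝ) 1 :=
  (par_tendsto' q μ).eventually (Icc_mem_nhds hq0 hq1)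

lemma params_ok {q β : ℝ} (hq0 : 0 < q) (hq1 : q < 1) (hβ0 : 0 < β) (hβ1 : β < 1)
    (μ₁ μ₂ γ₁ γ₂ : ℝ) : ∀ᶠ n : ℕ in atTop,
    (∀ x y, sbmB (q + μ₁ / Real.sqrt n) (q + μ₂ / Real.sqrt n) q x y ∈ Set.Icc (0:ℝ) 1) ∧
    (∀ x y, sbmB (β - γ₁ / Real.sqrt n) (β - γ₂ / Real.sqrt n) β x y ∈ Set.Icc (0:ℝ) 1) := by
  filter_upwards [par_mem hq0 hq1 μ₁, par_mem hq0 hq1 μ₂, par_mem' hβ0 hβ1 γ₁,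
    par_mem' hβ0 hβ1 γ₂] with n h1 h2 h3 h4
  exact ⟨sbmB_mem h1 h2 ⟨hq0.le, hq1.le⟩, sbmB_mem h3 h4 ⟨hβ0.le, hβ1.le⟩⟩

lemma confMass_nonneg {n : ℕ} {κ : ℝ} (h0 : 0 < κ) (h1 : κ < 1) {B βm : Bool → Bool → ℝ}
    (hB : ∀ x y, B x y ∈ Set.Icc (0:ℝ) 1) (hb : ∀ x y, βm x y ∈ Set.Icc (0:ℝ) 1) (k : Conf n) :
    0 ≤ confMass κ B βm k :=
  mul_nonneg (labelMass_nonneg h0 h1 _) (pairMass_nonneg hB hb _ _)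

/-- Law of the linear statistic. -/
def nuLaw (κ q β μ₁ μ₂ γ₁ γ₂ : ℝ) (t : Fin 6 → ℝ) (n : ℕ) : Measure ℝ :=
  discLaw (fun k : Conf n => confMass κ (sbmB (q + μ₁ / Real.sqrt n) (q + μ₂ / Real.sqrt n) q)
    (sbmB (β - γ₁ / Real.sqrt n) (β - γ₂ / Real.sqrt n) β) k) (Zconf q β μ₁ μ₂ γ₁ γ₂ t)

open Topology in
lemma nuLaw_main {κ q β : ℝ} (hκ0 : 0 < κ) (hκ1 : κ < 1) (hq0 : 0 < q) (hq1 : q < 1)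
    (hβ0 : 0 < β) (hβ1 : β < 1) (μ₁ μ₂ γ₁ γ₂ : ℝ) (t : Fin 6 → ℝ) (hV : 0 < Vlim κ q β t) (x : ℝ) :
    Tendsto (fun n => nuLaw κ q β μ₁ μ₂ γ₁ γ₂ t n (Set.Iic x)) atTop
      (𝓝 (gaussianReal 0 (Real.toNNReal (Vlim κ q β t)) (Set.Iic x))) := by
  have hok := params_ok hq0 hq1 hβ0 hβ1 μ₁ μ₂ γ₁ γ₂
  refine cdf_tendsto _ ?_ hV (fun s => ?_) x
  · filter_upwards [hok] with n hn
    exact discLaw_prob _ (fun k => confMass_nonneg hκ0 hκ1 hn.1 hn.2 k) (confMass_sum _ _ _)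
  · have h := label_average hκ0 hκ1 (condChar q β μ₁ μ₂ γ₁ γ₂ t s) _ ?_
      (condChar_tendsto hκ0 hκ1 q β μ₁ μ₂ γ₁ γ₂ t s)
    · refine h.congr' ?_
      filter_upwards [hok] with n hn
      rw [nuLaw, discLaw_charFun _ (fun k => confMass_nonneg hκ0 hκ1 hn.1 hn.2 k), Fintype.sum_prod_type]
      refine Finset.sum_congr rfl fun l _ => ?_
      rw [condChar, Finset.mul_sum]
      refine Finset.sum_congr rfl fun y _ => ?_
      rw [confMass]
      push_cast
      ring
    · filter_upwards [hok] with n hn l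
      rw [condChar]
      refine (norm_sum_le_of_le (f := _) (n := fun y => pairMass
        (sbmB (q + μ₁ / Real.sqrt n) (q + μ₂ / Real.sqrt n) q)
        (sbmB (β - γ₁ / Real.sqrt n) (β - γ₂ / Real.sqrt n) β) l y) _ fun y _ => ?_).trans
        (pairMass_sum _ _ l).le
      rw [norm_mul, Complex.norm_exp_ofReal_mul_I, mul_one, Complex.norm_real, Real.norm_eq_abs,
        abs_of_nonneg (pairMass_nonneg hn.1 hn.2 _ _)]

lemma law_eq {Ω : Type*} [MeasurableSpace Ω] {P : Measure Ω} {n : ℕ}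
    {κ q β μ₁ μ₂ γ₁ γ₂ : ℝ} (hκ0 : 0 < κ) (hκ1 : κ < 1)
    {c : Ω → Fin n → Bool} {A Y Y' : Ω → Fin n → Fin n → Bool}
    (hn : (∀ x y, sbmB (q + μ₁ / Real.sqrt n) (q + μ₂ / Real.sqrt n) q x y ∈ Set.Icc (0:ℝ) 1) ∧
      (∀ x y, sbmB (β - γ₁ / Real.sqrt n) (β - γ₂ / Real.sqrt n) β x y ∈ Set.Icc (0:ℝ) 1))
    (h : IsObsSBM P n (sbmB (q + μ₁ / Real.sqrt n) (q + μ₂ / Real.sqrt n) q)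
        (sbmB (β - γ₁ / Real.sqrt n) (β - γ₂ / Real.sqrt n) β) κ c A Y Y')
    (t : Fin 6 → ℝ) {S : Set ℝ} (hS : MeasurableSet S) :
    P {ω | ∑ k, t k * obsVec q β μ₁ μ₂ γ₁ γ₂ (c ω) (Y ω) (Y' ω) k ∈ S} =
      nuLaw κ q β μ₁ μ₂ γ₁ γ₂ t n S := by
  rw [nuLaw, ← finite_law h.isProb (conf c A Y Y') (fun k => confMass_nonneg hκ0 hκ1 hn.1 hn.2 k) (confMass_sum _ _ _)
    (conf_law h) _ hS]
  congr 1
  ext ω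
  have e1 := eq_toMat _ (h.symmY ω) (h.looplessY ω)
  have e2 := eq_toMat _ (h.symmY' ω) (h.looplessY' ω)
  change _ ∈ S ↔ _ ∈ S
  simp only [Zconf, conf]
  rw [← e1, ← e2]

open Topology in
lemma consist_aux {Ω : ℕ → Type} [∀ n, MeasurableSpace (Ω n)] {P : ∀ n, Measure (Ω n)}
    {u : ∀ n, Ω n → ℝ} {pn : ℕ → ℝ} {p V : ℝ} {ν : ℕ → Measure ℝ}
    (hpn : Tendsto pn atTop (𝓝 p))
    (hP : ∀ᶠ n in atTop, IsProbabilityMeasure (P n))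
    (hl : ∀ᶠ n in atTop, ∀ S, MeasurableSet S →
      P n {ω | (n : ℝ) * (u n ω - pn n) ∈ S} = ν n S)
    (hc : ∀ x, Tendsto (fun n => ν n (Set.Iic x)) atTop
      (𝓝 (gaussianReal 0 (Real.toNNReal V) (Set.Iic x))))
    {ε : ℝ} (hε : 0 < ε) :
    Tendsto (fun n => P n {ω | ε < |u n ω - p|}) atTop (𝓝 0) := by
  rw [ENNReal.tendsto_nhds_zero]
  intro δ hδ
  set g := gaussianReal 0 (Real.toNNReal V) with hg
  have h1 : Tendsto (fun M : ℝ => g (Set.Iic (-M)) + (1 - g (Set.Iic M))) atTop (𝓝 0) := by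
    have a1 : Tendsto (fun M : ℝ => g (Set.Iic (-M))) atTop (𝓝 0) := by
      have := (ENNReal.tendsto_ofReal (tendsto_cdf_atBot g)).comp tendsto_neg_atTop_atBot
      simpa [Function.comp_def, ofReal_cdf] using this
    have a2 : Tendsto (fun M : ℝ => g (Set.Iic M)) atTop (𝓝 1) := by
      have := (ENNReal.tendsto_ofReal (tendsto_cdf_atTop g))
      simpa [ofReal_cdf] using this
    have := a1.add (ENNReal.Tendsto.sub (tendsto_const_nhds (x := (1 : ENNReal))) a2
      (Or.inl ENNReal.one_ne_top))
    simpa using this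
  obtain ⟨M, hM⟩ := (h1.eventually (gt_mem_nhds hδ)).exists
  have h2 : Tendsto (fun n => ν n (Set.Iic (-M)) + (1 - ν n (Set.Iic M))) atTop
      (𝓝 (g (Set.Iic (-M)) + (1 - g (Set.Iic M)))) :=
    (hc (-M)).add (ENNReal.Tendsto.sub (tendsto_const_nhds (x := (1 : ENNReal))) (hc M)
      (Or.inl ENNReal.one_ne_top))
  have h3 : ∀ᶠ n in atTop, |pn n - p| < ε / 2 := by
    have := (Metric.tendsto_nhds.1 hpn) (ε / 2) (by linarith)
    simpa [Real.dist_eq] using this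
  have h4 : ∀ᶠ n : ℕ in atTop, M < (n : ℝ) * (ε / 2) :=
    ((tendsto_natCast_atTop_atTop).atTop_mul_const (by linarith)).eventually_gt_atTop M
  filter_upwards [h2.eventually (gt_mem_nhds hM), h3, h4, hl, hP] with n g2 g3 g4 g5 g6
  have hν : IsProbabilityMeasure (ν n) := ⟨by
    rw [← g5 _ MeasurableSet.univ]
    simp⟩
  refine le_trans ?_ g2.le
  have e : 1 - ν n (Set.Iic M) = ν n (Set.Ioi M) := by
    rw [← prob_compl_eq_one_sub measurableSet_Iic, Set.compl_Iic]
  rw [e, ← g5 _ measurableSet_Iic, ← g5 _ measurableSet_Ioi]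
  refine (measure_mono ?_).trans (measure_union_le _ _)
  intro ω hω
  have hω' : ε < |u n ω - p| := hω
  have hn0 : (0:ℝ) ≤ n := Nat.cast_nonneg n
  rw [abs_lt] at g3
  rcases lt_abs.1 hω' with h | h
  · right
    change M < (n : ℝ) * (u n ω - pn n)
    have : ε / 2 ≤ u n ω - pn n := by linarith
    nlinarith
  · left
    change (n : ℝ) * (u n ω - pn n) ≤ -M
    have : ε / 2 ≤ -(u n ω - pn n) := by linarith
    nlinarith

lemma sigma_det {q β : ℝ} (hq0 : 0 < q) (hq1 : q < 1) (hβ0 : 0 < β) (hβ1 : β < 1)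
    {a b : ℝ} (hab : a ≠ 0 ∨ b ≠ 0) : 0 < quadU q β a b := by
  set r := (1 - β) * q with hr
  have hr0 : 0 < r := mul_pos (by linarith) hq0
  have hr1 : r < 1 - β := by
    rw [hr]; nlinarith
  have hD : 0 < (r * (1 - r)) * ((1 / 2 - β * r) * β * r) - ((1 / 2 - r) * β * r) ^ 2 := by
    have : (r * (1 - r)) * ((1 / 2 - β * r) * β * r) - ((1 / 2 - r) * β * r) ^ 2
      = β * r ^ 2 * (1 / 2 - r / 2 - β / 4) := by ring
    rw [this]
    have : 0 < 1 / 2 - r / 2 - β / 4 := by linarith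
    positivity
  have hA : 0 < r * (1 - r) := mul_pos hr0 (by linarith)
  have hid : (r * (1 - r)) * quadU q β a b = (a * (r * (1 - r)) + b * ((1 / 2 - r) * β * r)) ^ 2 +
      b ^ 2 * ((r * (1 - r)) * ((1 / 2 - β * r) * β * r) - ((1 / 2 - r) * β * r) ^ 2) := by
    simp only [quadU, ← hr]
    ring
  have hpos : 0 < (r * (1 - r)) * quadU q β a b := by
    rw [hid]
    by_cases hb : b = 0
    · have ha : a ≠ 0 := by tauto
      subst hb
      have : 0 < (a * (r * (1 - r))) ^ 2 := by positivity
      simpa using this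
    · have : 0 < b ^ 2 := by positivity
      have := mul_pos this hD
      nlinarith [sq_nonneg (a * (r * (1 - r)) + b * ((1 / 2 - r) * β * r))]
  exact (mul_pos_iff_of_pos_left hA).1 hpos

lemma sigma_det' {q β : ℝ} (hq0 : 0 < q) (hq1 : q < 1) (hβ0 : 0 < β) (hβ1 : β < 1)
    (a b : ℝ) : 0 ≤ quadU q β a b := by
  by_cases h : a ≠ 0 ∨ b ≠ 0
  · exact (sigma_det hq0 hq1 hβ0 hβ1 h).le
  · push Not at h
    simp [quadU, h.1, h.2]

lemma sigma_posDef {q β : ℝ} (hq0 : 0 < q) (hq1 : q < 1) (hβ0 : 0 < β) (hβ1 : β < 1) :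
    (SigmaU ((1 - β) * q) β).PosDef := by
  refine Matrix.PosDef.of_dotProduct_mulVec_pos ?_ ?_
  · ext i j
    fin_cases i <;> fin_cases j <;> simp [SigmaU]
  · intro x hx
    have h : x 0 ≠ 0 ∨ x 1 ≠ 0 := by
      by_contra hcon
      push Not at hcon
      apply hx
      funext i
      fin_cases i
      · exact hcon.1
      · exact hcon.2
    have h1 := sigma_det hq0 hq1 hβ0 hβ1 h
    have e : dotProduct (star x) (Matrix.mulVec (SigmaU ((1 - β) * q) β) x)
        = quadU q β (x 0) (x 1) := by
      simp [SigmaU, quadU, Matrix.mulVec, dotProduct, Fin.sum_univ_two]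
      ring
    rw [e]
    exact h1

lemma Vlim_pos {κ q β : ℝ} (hκ0 : 0 < κ) (hκ1 : κ < 1) (hq0 : 0 < q) (hq1 : q < 1)
    (hβ0 : 0 < β) (hβ1 : β < 1) {t : Fin 6 → ℝ} (ht : t ≠ 0) : 0 < Vlim κ q β t := by
  have hk : 0 < 1 - κ := by linarith
  have i1 : 0 < (κ ^ 2 / 2)⁻¹ := by positivity
  have i2 : 0 < ((1 - κ) ^ 2 / 2)⁻¹ := by positivity
  have i3 : 0 < (κ * (1 - κ))⁻¹ := by positivity
  have n1 := mul_nonneg i1.le (sigma_det' hq0 hq1 hβ0 hβ1 (t 0) (t 1))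
  have n2 := mul_nonneg i2.le (sigma_det' hq0 hq1 hβ0 hβ1 (t 2) (t 3))
  have n3 := mul_nonneg i3.le (sigma_det' hq0 hq1 hβ0 hβ1 (t 4) (t 5))
  unfold Vlim
  by_cases h1 : t 0 ≠ 0 ∨ t 1 ≠ 0
  · have := mul_pos i1 (sigma_det hq0 hq1 hβ0 hβ1 h1)
    linarith
  by_cases h2 : t 2 ≠ 0 ∨ t 3 ≠ 0
  · have := mul_pos i2 (sigma_det hq0 hq1 hβ0 hβ1 h2)
    linarith
  by_cases h3 : t 4 ≠ 0 ∨ t 5 ≠ 0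
  · have := mul_pos i3 (sigma_det hq0 hq1 hβ0 hβ1 h3)
    linarith
  exfalso
  push Not at h1 h2 h3
  apply ht
  funext i
  fin_cases i
  · exact h1.1
  · exact h1.2
  · exact h2.1
  · exact h2.2
  · exact h3.1
  · exact h3.2

lemma quadForm6_eq (κ q β : ℝ) (t : Fin 6 → ℝ) :
    quadForm6 (Sigma6 κ ((1 - β) * q) β) t = Vlim κ q β t := by
  simp [quadForm6, Sigma6, Vlim, quadU, SigmaUfun, blockScale, Fin.sum_univ_six]
  ring

end Helpers

theorem statement_11
    (κ q β μ₁ μ₂ γ₁ γ₂ : ℝ)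
    (hκ0 : 0 < κ) (hκ1 : κ < 1) (hq0 : 0 < q) (hq1 : q < 1)
    (hβ0 : 0 < β) (hβ1 : β < 1)
    (Ω : ℕ → Type) [mΩ : ∀ n, MeasurableSpace (Ω n)] (P : ∀ n, Measure (Ω n))
    (c : ∀ n, Ω n → Fin n → Bool)
    (A Y Y' : ∀ n, Ω n → Fin n → Fin n → Bool)
    (hmodel : ∀ᶠ n : ℕ in atTop,
      IsObsSBM (P n) n
        (sbmB (q + μ₁ / Real.sqrt n) (q + μ₂ / Real.sqrt n) q)
        (sbmB (β - γ₁ / Real.sqrt n) (β - γ₂ / Real.sqrt n) β)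
        κ (c n) (A n) (Y n) (Y' n)) :
    -- Σ_u is strictly positive definite
    (SigmaU ((1 - β) * q) β).PosDef ∧
    -- Cramér–Wold: every nonzero linear combination of the centered, scaled
    -- moment vector converges in distribution to the centred Gaussian with
    -- the corresponding variance
    (∀ t : Fin 6 → ℝ, t ≠ 0 → ∀ x : ℝ,
      Tendsto (fun n =>
          (P n {ω | ∑ k, t k *
              obsVec q β μ₁ μ₂ γ₁ γ₂ (c n ω) (Y n ω) (Y' n ω) k ≤ x}).toReal)
        atTop
        (nhds ((gaussianReal 0
            (Real.toNNReal (quadForm6 (Sigma6 κ ((1 - β) * q) β) t))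
            (Set.Iic x)).toReal))) ∧
    -- consistency of the six empirical moments
    (∀ ε > (0:ℝ),
      Tendsto (fun n => P n {ω |
          ε < |u1hat (within1 (c n ω)) (Y n ω) - (1 - β) * q|}) atTop (nhds 0) ∧
      Tendsto (fun n => P n {ω |
          ε < |u2hat (within1 (c n ω)) (Y n ω) (Y' n ω) - β * ((1 - β) * q)|})
        atTop (nhds 0) ∧
      Tendsto (fun n => P n {ω |
          ε < |u1hat (within2 (c n ω)) (Y n ω) - (1 - β) * q|}) atTop (nhds 0) ∧
      Tendsto (fun n => P n {ω |
          ε < |u2hat (within2 (c n ω)) (Y n ω) (Y' n ω) - β * ((1 - β) * q)|})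
        atTop (nhds 0) ∧
      Tendsto (fun n => P n {ω |
          ε < |u1hat (between (c n ω)) (Y n ω) - (1 - β) * q|}) atTop (nhds 0) ∧
      Tendsto (fun n => P n {ω |
          ε < |u2hat (between (c n ω)) (Y n ω) (Y' n ω) - β * ((1 - β) * q)|})
        atTop (nhds 0)) := by
  have hcdf : ∀ t : Fin 6 → ℝ, t ≠ 0 → ∀ x : ℝ,
      Tendsto (fun n => nuLaw κ q β μ₁ μ₂ γ₁ γ₂ t n (Set.Iic x)) atTop
        (nhds (gaussianReal 0 (Real.toNNReal (Vlim κ q β t)) (Set.Iic x))) := fun t ht x =>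
    nuLaw_main hκ0 hκ1 hq0 hq1 hβ0 hβ1 μ₁ μ₂ γ₁ γ₂ t (Vlim_pos hκ0 hκ1 hq0 hq1 hβ0 hβ1 ht) x
  have hlaw : ∀ᶠ n in atTop, ∀ (t : Fin 6 → ℝ) (S : Set ℝ), MeasurableSet S →
      P n {ω | ∑ k, t k * obsVec q β μ₁ μ₂ γ₁ γ₂ (c n ω) (Y n ω) (Y' n ω) k ∈ S} =
        nuLaw κ q β μ₁ μ₂ γ₁ γ₂ t n S := by
    filter_upwards [hmodel, params_ok hq0 hq1 hβ0 hβ1 μ₁ μ₂ γ₁ γ₂] with n h1 h2 t S hS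
    exact law_eq hκ0 hκ1 h2 h1 t hS
  have hprob : ∀ᶠ n in atTop, IsProbabilityMeasure (P n) := by
    filter_upwards [hmodel] with n h1
    exact h1.isProb
  refine ⟨sigma_posDef hq0 hq1 hβ0 hβ1, ?_, ?_⟩
  · intro t ht x
    rw [quadForm6_eq]
    refine (((ENNReal.tendsto_toReal (measure_ne_top _ _)).comp (hcdf t ht x))).congr' ?_
    filter_upwards [hlaw] with n hn
    simp only [Function.comp]
    rw [← hn t _ measurableSet_Iic]
    rfl
  · intro ε hε
    have hgen : ∀ (k : Fin 6) (u : ∀ n, Ω n → ℝ) (pn : ℕ → ℝ) (p : ℝ),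
        Tendsto pn atTop (nhds p) →
        (∀ n ω, obsVec q β μ₁ μ₂ γ₁ γ₂ (c n ω) (Y n ω) (Y' n ω) k = (n : ℝ) * (u n ω - pn n)) →
        Tendsto (fun n => P n {ω | ε < |u n ω - p|}) atTop (nhds 0) := by
      intro k u pn p hp hu
      have ht : (Pi.single k 1 : Fin 6 → ℝ) ≠ 0 := by
        intro h
        have := congrFun h k
        simp at this
      refine consist_aux hp hprob ?_ (hcdf _ ht) hε
      filter_upwards [hlaw] with n hn S hS
      rw [← hn _ S hS]
      congr 1
      ext ω
      change _ ∈ S ↔ _ ∈ S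
      simp [Pi.single_apply, hu]
    have hq : ∀ μ γ : ℝ, Tendsto (fun n : ℕ => (1 - β + γ / Real.sqrt n) * (q + μ / Real.sqrt n))
        atTop (nhds ((1 - β) * q)) := fun μ γ => (par_tendsto (1 - β) γ).mul (par_tendsto q μ)
    have hbq : ∀ μ γ : ℝ, Tendsto (fun n : ℕ => (β - γ / Real.sqrt n) *
        ((1 - β + γ / Real.sqrt n) * (q + μ / Real.sqrt n)))
        atTop (nhds (β * ((1 - β) * q))) := fun μ γ => (par_tendsto' β γ).mul (hq μ γ)
    exact ⟨hgen 0 _ _ _ (hq μ₁ γ₁) fun n ω => rfl, hgen 1 _ _ _ (hbq μ₁ γ₁) fun n ω => rfl,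
      hgen 2 _ _ _ (hq μ₂ γ₂) fun n ω => rfl, hgen 3 _ _ _ (hbq μ₂ γ₂) fun n ω => rfl,
      hgen 4 _ _ _ tendsto_const_nhds fun n ω => rfl,
      hgen 5 _ _ _ tendsto_const_nhds fun n ω => rfl⟩

end
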